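/- arXiv:1512.04041 — 2 statements merged into one kernel-verified Lean document; each statement's English description precedes it below -/
import Mathlib

section
/- For r, s ≥ 1, consider an ultimately periodic continued fraction ξ = [0, a_1, …, a_r, \overline{a_{r+1}, …, a_{r+s}}] ∈ F_q((T^{-1})) with a_r ≠ a_{r+s} (all partial quotients in F_q[T] of degree ≥ 1), and let (p_n/q_n)_{n≥0} be its convergents. Then ξ is quadratic, and min(|a_r|, |a_{r+s}|)/|q_r|² ≤ |ξ − ξ'| ≤ |a_r a_{r+s}|/|q_r|², where ξ' is the Galois conjugate of ξ. -/
open Polynomial Filter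
open scoped ENNReal

noncomputable section

namespace Ooto

variable (Fq : Type) [Field Fq] [Fintype Fq]

/-- `F_q((T⁻¹))`, realized as formal Laurent series in the variable `X = T⁻¹`. -/
abbrev K := LaurentSeries Fq

/-- The element `T = X⁻¹` of `F_q((T⁻¹))`. -/
def TT : K Fq := HahnSeries.single (-1 : ℤ) (1 : Fq)

/-- The natural embedding of `F_q[T]` into `F_q((T⁻¹))`, sending `T` to `T`. -/
def polyToK : Polynomial Fq →+* K Fq := Polynomial.eval₂RingHom HahnSeries.C (TT Fq)

open Classical in
/-- The absolute value on `F_q((T⁻¹))`: `|0| = 0` and `|ξ| = q^{-N}` where `N` is the order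
of `ξ` as a series in `T⁻¹`. -/
def kabs (f : K Fq) : ℝ := if f = 0 then 0 else (Fintype.card Fq : ℝ) ^ (-f.order)

/-- A fixed algebraic closure of `F_q((T⁻¹))`. -/
abbrev L := AlgebraicClosure (K Fq)

def toL : K Fq →+* L Fq := algebraMap (K Fq) (L Fq)

def φ : Polynomial Fq →+* L Fq := (toL Fq).comp (polyToK Fq)

/-- Evaluation of `P ∈ (F_q[T])[X]` at `ξ ∈ F_q((T⁻¹))`. -/
def evalK (P : Polynomial (Polynomial Fq)) (ξ : K Fq) : K Fq :=
  Polynomial.eval₂ (polyToK Fq) ξ P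

/-- Evaluation of `P ∈ (F_q[T])[X]` at a point of the algebraic closure. -/
def evalL (P : Polynomial (Polynomial Fq)) (α : L Fq) : L Fq :=
  Polynomial.eval₂ (φ Fq) α P

/-- Height of a polynomial over `F_q[T]`: the maximum of the absolute values of its
coefficients. -/
def Hpoly (P : Polynomial (Polynomial Fq)) : ℝ := ⨆ i : ℕ, kabs Fq (polyToK Fq (P.coeff i))

/-- `P` is the minimal polynomial of `α`: a non-constant irreducible primitive polynomial in
`(F_q[T])[X]` whose leading coefficient is monic in `T`, vanishing at `α`. -/
def IsMinPolyOf (P : Polynomial (Polynomial Fq)) (α : L Fq) : Prop :=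
  0 < P.natDegree ∧ Irreducible P ∧ P.IsPrimitive ∧ (P.leadingCoeff).Monic ∧ evalL Fq P α = 0

/-- `α` is algebraic over `F_q(T)`. -/
def IsAlgElem (α : L Fq) : Prop := ∃ P, IsMinPolyOf Fq P α

open Classical in
/-- The minimal polynomial of an algebraic element (junk value `0` otherwise). -/
def minPolyPrim (α : L Fq) : Polynomial (Polynomial Fq) :=
  if h : IsAlgElem Fq α then h.choose else 0

/-- Degree of an algebraic element. -/
def degAlg (α : L Fq) : ℕ := (minPolyPrim Fq α).natDegree

/-- Height of an algebraic element. -/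
def heightAlg (α : L Fq) : ℝ := Hpoly Fq (minPolyPrim Fq α)

/-- Inseparable degree of a polynomial `P ∈ (F_q[T])[X]`: the largest power `f = p^j` of the
characteristic such that `P(X) = R(X^f)` for some `R`. -/
def insepDeg (P : Polynomial (Polynomial Fq)) : ℕ :=
  (ringChar Fq) ^ sSup {j : ℕ | ∃ R : Polynomial (Polynomial Fq),
    P = R.comp (Polynomial.X ^ (ringChar Fq) ^ j)}

/-- Inseparable degree of an algebraic element. -/
def insepAlg (α : L Fq) : ℕ := insepDeg Fq (minPolyPrim Fq α)

/-- `α'` is the Galois conjugate of the quadratic element `α` (equal to `α` itself in the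
inseparable case): the minimal polynomial of `α` factors as `A(X - α)(X - α')`. -/
def IsConjOf (α' α : L Fq) : Prop :=
  (minPolyPrim Fq α).natDegree = 2 ∧
  (minPolyPrim Fq α).map (φ Fq) =
    Polynomial.C (φ Fq (minPolyPrim Fq α).leadingCoeff) *
      (Polynomial.X - Polynomial.C α) * (Polynomial.X - Polynomial.C α')

/-- `v` is an absolute value on the algebraic closure of `F_q((T⁻¹))` extending `kabs`
(such an extension exists and is unique). -/
structure IsAbsExt (v : L Fq → ℝ) : Prop where
  eq_zero_iff : ∀ x, v x = 0 ↔ x = 0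
  map_mul : ∀ x y, v (x * y) = v x * v y
  add_le : ∀ x y, v (x + y) ≤ max (v x) (v y)
  nonneg : ∀ x, 0 ≤ v x
  extends_kabs : ∀ f : K Fq, v (toL Fq f) = kabs Fq f

/-- The exponent `w_n(ξ)`: the supremum of the real numbers `w` such that
`0 < |P(ξ)| ≤ H(P)^{-w}` for infinitely many `P ∈ (F_q[T])[X]` of degree at most `n`. -/
def wExp (n : ℕ) (ξ : K Fq) : EReal :=
  sSup {x : EReal | ∃ w : ℝ, x = (w : EReal) ∧
    {P : Polynomial (Polynomial Fq) | P.natDegree ≤ n ∧ 0 < kabs Fq (evalK Fq P ξ) ∧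
      kabs Fq (evalK Fq P ξ) ≤ Hpoly Fq P ^ (-w)}.Infinite}

/-- The exponent `w_n^*(ξ)`: the supremum of the real numbers `w` such that
`0 < |ξ - α| ≤ H(α)^{-w-1}` for infinitely many algebraic `α` of degree at most `n`. -/
def wStarExp (v : L Fq → ℝ) (n : ℕ) (ξ : K Fq) : EReal :=
  sSup {x : EReal | ∃ w : ℝ, x = (w : EReal) ∧
    {α : L Fq | IsAlgElem Fq α ∧ degAlg Fq α ≤ n ∧ 0 < v (toL Fq ξ - α) ∧
      v (toL Fq ξ - α) ≤ heightAlg Fq α ^ (-w - 1)}.Infinite}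

/-- `pSeq a n = p_{n-1}`, the numerators of the convergents of `[a 0; a 1, a 2, …]`
(with `p_{-1} = 1`). -/
def pSeq (a : ℕ → Polynomial Fq) : ℕ → Polynomial Fq
  | 0 => 1
  | 1 => a 0
  | (n+2) => a (n+1) * pSeq a (n+1) + pSeq a n

/-- `qSeq a n = q_{n-1}`, the denominators of the convergents of `[a 0; a 1, a 2, …]`
(with `q_{-1} = 0`). -/
def qSeq (a : ℕ → Polynomial Fq) : ℕ → Polynomial Fq
  | 0 => 0
  | 1 => 1
  | (n+2) => a (n+1) * qSeq a (n+1) + qSeq a n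

/-- `ξ` has continued fraction expansion `[a 0; a 1, a 2, …]`: each partial quotient `a n`
(`n ≥ 1`) has degree at least one and `|ξ - p_n/q_n| = |q_n|⁻¹|q_{n+1}|⁻¹` for all `n ≥ 0`. -/
def IsCFOf (ξ : K Fq) (a : ℕ → Polynomial Fq) : Prop :=
  (∀ n, 1 ≤ n → 1 ≤ (a n).natDegree) ∧
  ∀ n : ℕ,
    kabs Fq (ξ - polyToK Fq (pSeq Fq a (n+1)) / polyToK Fq (qSeq Fq a (n+1))) =
      (kabs Fq (polyToK Fq (qSeq Fq a (n+1))) * kabs Fq (polyToK Fq (qSeq Fq a (n+2))))⁻¹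

/-- The sequence of partial quotients of `[0; b 0, b 1, b 2, …]`. -/
def cfA (b : ℕ → Polynomial Fq) : ℕ → Polynomial Fq := fun n => if n = 0 then 0 else b (n - 1)

/-- `qden b n` is the denominator `q_n` of the `n`-th convergent of `[0; b 0, b 1, …]`. -/
def qden (b : ℕ → Polynomial Fq) (n : ℕ) : Polynomial Fq := qSeq Fq (cfA Fq b) (n + 1)

/-- `V^w` for a finite word `V` and a real `w ≥ 0`: `⌊w⌋` copies of `V` followed by the prefix
of `V` of length `⌈(w - ⌊w⌋)|V|⌉`. -/
def wordPow {A : Type*} (V : List A) (w : ℝ) : List A :=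
  (List.replicate ⌊w⌋₊ V).flatten ++ V.take ⌈(w - ⌊w⌋₊) * V.length⌉₊

/-- The finite word `l` is a prefix of the infinite word `b`. -/
def IsPrefixOfSeq {A : Type*} (l : List A) (b : ℕ → A) : Prop :=
  ∀ (i : ℕ) (h : i < l.length), l.get ⟨i, h⟩ = b i

/-- Condition `(*)_ρ` for an infinite word. -/
def SatisfiesCond {A : Type*} (b : ℕ → A) (ρ : ℝ) : Prop :=
  ∃ (U V : ℕ → List A) (w : ℕ → ℝ),
    (∀ n, V n ≠ []) ∧ (∀ n, 0 ≤ w n) ∧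
    (∀ n, IsPrefixOfSeq (U n ++ wordPow (V n) (w n)) b) ∧
    (∀ n, ρ * (((U n).length + (V n).length : ℕ) : ℝ) ≤
      (((U n).length + (wordPow (V n) (w n)).length : ℕ) : ℝ)) ∧
    StrictMono fun n => (wordPow (V n) (w n)).length

/-- The Diophantine exponent of an infinite word: the supremum of the `ρ` such that the word
satisfies Condition `(*)_ρ`. -/
def dioExp {A : Type*} (b : ℕ → A) : EReal :=
  sSup {x : EReal | ∃ ρ : ℝ, x = (ρ : EReal) ∧ SatisfiesCond b ρ}

/-- The complexity function: the number of distinct blocks of `n` consecutive letters. -/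
def complexity {A : Type*} (b : ℕ → A) (n : ℕ) : ℕ∞ :=
  {w : Fin n → A | ∃ i : ℕ, ∀ k : Fin n, w k = b (i + k)}.encard

/-- The infinite word `b` is ultimately periodic. -/
def UltimatelyPeriodic {A : Type*} (b : ℕ → A) : Prop :=
  ∃ N T : ℕ, 0 < T ∧ ∀ n, N ≤ n → b (n + T) = b n


section helpers

variable {Fq}
variable {v : L Fq → ℝ}

theorem v_one (hv : IsAbsExt Fq v) : v 1 = 1 := by
  have h := hv.map_mul 1 1
  have h0 : v 1 ≠ 0 := fun h => one_ne_zero ((hv.eq_zero_iff 1).1 h)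
  rw [mul_one] at h
  exact (mul_left_cancel₀ h0 (by rw [← h, mul_one])).symm

theorem v_pos (hv : IsAbsExt Fq v) {x : L Fq} (hx : x ≠ 0) : 0 < v x :=
  lt_of_le_of_ne (hv.nonneg x) (fun h => hx ((hv.eq_zero_iff x).1 h.symm))

theorem v_neg (hv : IsAbsExt Fq v) (x : L Fq) : v (-x) = v x := by
  have h1 : v (-1) * v (-1) = 1 := by rw [← hv.map_mul, neg_one_mul, neg_neg, v_one hv]
  have h2 : v (-1) = 1 := by nlinarith [hv.nonneg (-1)]
  rw [← neg_one_mul, hv.map_mul, h2, one_mul]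

theorem v_sub_le (hv : IsAbsExt Fq v) (x y : L Fq) : v (x - y) ≤ max (v x) (v y) := by
  rw [sub_eq_add_neg, ← v_neg hv y]; exact hv.add_le _ _

theorem v_add_eq (hv : IsAbsExt Fq v) {x y : L Fq} (h : v y < v x) : v (x + y) = v x := by
  apply le_antisymm
  · exact (hv.add_le x y).trans (max_le le_rfl h.le)
  · have := v_sub_le hv (x + y) y
    rw [add_sub_cancel_right] at this
    rcases le_max_iff.1 this with h1 | h1
    · exact h1
    · linarith

theorem v_sub_eq (hv : IsAbsExt Fq v) {x y : L Fq} (h : v y < v x) : v (x - y) = v x := by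
  rw [sub_eq_add_neg]; exact v_add_eq hv (by rwa [v_neg hv])

theorem v_pow (hv : IsAbsExt Fq v) (x : L Fq) (n : ℕ) : v (x ^ n) = v x ^ n := by
  induction n with
  | zero => simp [v_one hv]
  | succ k ih => rw [pow_succ, hv.map_mul, ih, pow_succ]

theorem v_phi (f : Polynomial Fq) (hv : IsAbsExt Fq v) :
    v (φ Fq f) = kabs Fq (polyToK Fq f) := hv.extends_kabs _

theorem one_lt_c : (1 : ℝ) < (Fintype.card Fq : ℝ) := by
  exact_mod_cast Fintype.one_lt_card (α := Fq)

theorem v_C (hv : IsAbsExt Fq v) {c : Fq} (hc : c ≠ 0) : v (φ Fq (C c)) = 1 := by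
  rw [v_phi _ hv]
  have : polyToK Fq (C c) = HahnSeries.C c := by simp [polyToK]
  rw [this, kabs, if_neg (by simpa using hc), HahnSeries.order_C]
  simp

theorem v_X (hv : IsAbsExt Fq v) : v (φ Fq X) = Fintype.card Fq := by
  rw [v_phi _ hv]
  have : polyToK Fq X = TT Fq := by simp [polyToK]
  rw [this, kabs, TT, if_neg (by simp), HahnSeries.order_single one_ne_zero]
  simp

theorem v_poly (hv : IsAbsExt Fq v) (n : ℕ) : ∀ (f : Polynomial Fq), f ≠ 0 → f.natDegree = n →
    v (φ Fq f) = (Fintype.card Fq : ℝ) ^ n := by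
  induction n using Nat.strong_induction_on with
  | _ n ih =>
    intro f hf hn
    have hm : v (φ Fq (monomial f.natDegree f.leadingCoeff)) = (Fintype.card Fq : ℝ) ^ n := by
      rw [← C_mul_X_pow_eq_monomial, _root_.map_mul, _root_.map_pow, hv.map_mul, v_pow hv,
        v_C hv (leadingCoeff_ne_zero.2 hf), v_X hv, hn, one_mul]
    rw [← eraseLead_add_monomial_natDegree_leadingCoeff f, add_comm, map_add, ← hm]
    apply v_add_eq hv
    rw [hm]
    have hc := one_lt_c (Fq := Fq)
    by_cases he : f.eraseLead = 0
    · rw [he, map_zero, (hv.eq_zero_iff 0).2 rfl]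
      positivity
    · have hlt : f.eraseLead.natDegree < n := by
        rw [← hn]
        rcases eraseLead_natDegree_lt_or_eraseLead_eq_zero f with h | h
        · exact h
        · exact absurd h he
      rw [ih _ hlt _ he rfl]
      exact pow_lt_pow_right₀ hc hlt

theorem v_poly_ge_one (hv : IsAbsExt Fq v) {f : Polynomial Fq} (hf : f ≠ 0) :
    1 ≤ v (φ Fq f) := by
  rw [v_poly hv _ f hf rfl]
  exact one_le_pow₀ one_lt_c.le

theorem v_poly_ge_c (hv : IsAbsExt Fq v) {f : Polynomial Fq} (hf : 1 ≤ f.natDegree) :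
    (Fintype.card Fq : ℝ) ≤ v (φ Fq f) := by
  have h0 : f ≠ 0 := by rintro rfl; simp at hf
  rw [v_poly hv _ f h0 rfl]
  exact le_self_pow₀ one_lt_c.le (by omega)

theorem phi_inj (hv : IsAbsExt Fq v) {f : Polynomial Fq} (hf : φ Fq f = 0) : f = 0 := by
  by_contra h
  have := v_poly_ge_one hv h
  rw [hf, (hv.eq_zero_iff 0).2 rfl] at this
  linarith

variable {a : ℕ → Polynomial Fq}

/-- The linear form `q_{n-1} ξ - p_{n-1}`. -/
def DD (a : ℕ → Polynomial Fq) (ξ : K Fq) (n : ℕ) : L Fq :=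
  φ Fq (qSeq Fq a n) * toL Fq ξ - φ Fq (pSeq Fq a n)

theorem Q_rec (n : ℕ) : φ Fq (qSeq Fq a (n+2)) =
    φ Fq (a (n+1)) * φ Fq (qSeq Fq a (n+1)) + φ Fq (qSeq Fq a n) := by
  rw [← _root_.map_mul, ← map_add]; rfl

theorem P_rec (n : ℕ) : φ Fq (pSeq Fq a (n+2)) =
    φ Fq (a (n+1)) * φ Fq (pSeq Fq a (n+1)) + φ Fq (pSeq Fq a n) := by
  rw [← _root_.map_mul, ← map_add]; rfl

theorem D_rec (ξ : K Fq) (n : ℕ) : DD a ξ (n+2) = φ Fq (a (n+1)) * DD a ξ (n+1) + DD a ξ n := by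
  simp only [DD, Q_rec, P_rec]; ring

theorem Q_lt (hv : IsAbsExt Fq v) (ha : ∀ n, 1 ≤ n → 1 ≤ (a n).natDegree) (n : ℕ) :
    v (φ Fq (qSeq Fq a n)) < v (φ Fq (qSeq Fq a (n+1))) ∧
    v (φ Fq (qSeq Fq a (n+2))) = v (φ Fq (a (n+1))) * v (φ Fq (qSeq Fq a (n+1))) := by
  have key : ∀ n, v (φ Fq (qSeq Fq a n)) < v (φ Fq (qSeq Fq a (n+1))) →
      v (φ Fq (qSeq Fq a (n+1))) < v (φ Fq (a (n+1))) * v (φ Fq (qSeq Fq a (n+1))) ∧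
      v (φ Fq (qSeq Fq a (n+2))) = v (φ Fq (a (n+1))) * v (φ Fq (qSeq Fq a (n+1))) := by
    intro n h
    have h0 := hv.nonneg (φ Fq (qSeq Fq a n))
    have h1 := v_poly_ge_c hv (ha (n+1) (by omega))
    have h2 := one_lt_c (Fq := Fq)
    have h3 : v (φ Fq (qSeq Fq a (n+1))) < v (φ Fq (a (n+1))) * v (φ Fq (qSeq Fq a (n+1))) := by
      nlinarith
    refine ⟨h3, ?_⟩
    rw [Q_rec, ← hv.map_mul]
    apply v_add_eq hv
    rw [hv.map_mul]
    linarith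
  have h : v (φ Fq (qSeq Fq a n)) < v (φ Fq (qSeq Fq a (n+1))) := by
    induction n with
    | zero => simp [qSeq, v_one hv, (hv.eq_zero_iff 0).2 rfl]
    | succ k ih =>
      obtain ⟨h1, h2⟩ := key k ih
      rw [h2]; exact h1
  exact ⟨h, (key n h).2⟩

theorem Q_mono (hv : IsAbsExt Fq v) (ha : ∀ n, 1 ≤ n → 1 ≤ (a n).natDegree) :
    StrictMono fun n => v (φ Fq (qSeq Fq a n)) :=
  strictMono_nat_of_lt_succ fun n => (Q_lt hv ha n).1

theorem Q_ge (hv : IsAbsExt Fq v) (ha : ∀ n, 1 ≤ n → 1 ≤ (a n).natDegree) (n : ℕ) :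
    (Fintype.card Fq : ℝ) ^ n ≤ v (φ Fq (qSeq Fq a (n+1))) := by
  induction n with
  | zero => simp [qSeq, v_one hv]
  | succ k ih =>
    rw [(Q_lt hv ha k).2, pow_succ, mul_comm]
    have h2 := one_lt_c (Fq := Fq)
    exact mul_le_mul (v_poly_ge_c hv (ha (k+1) (by omega))) ih (by positivity) (hv.nonneg _)

theorem Q_pos (hv : IsAbsExt Fq v) (ha : ∀ n, 1 ≤ n → 1 ≤ (a n).natDegree) (n : ℕ) :
    0 < v (φ Fq (qSeq Fq a (n+1))) :=
  lt_of_lt_of_le (by have := one_lt_c (Fq := Fq); positivity) (Q_ge hv ha n)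

theorem D_abs (hv : IsAbsExt Fq v) {ξ : K Fq} (hξ : IsCFOf Fq ξ a) (n : ℕ) :
    v (DD a ξ (n+1)) = (v (φ Fq (qSeq Fq a (n+2))))⁻¹ := by
  have h := hξ.2 n
  rw [← hv.extends_kabs, ← v_phi _ hv, ← v_phi _ hv, map_sub, map_div₀] at h
  have hp := Q_pos hv hξ.1 n
  have hp2 := Q_pos hv hξ.1 (n+1)
  have hq : φ Fq (qSeq Fq a (n+1)) ≠ 0 := by
    intro h0; rw [h0, (hv.eq_zero_iff 0).2 rfl] at hp; exact lt_irrefl _ hp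
  have : DD a ξ (n+1) = φ Fq (qSeq Fq a (n+1)) *
      (toL Fq ξ - toL Fq (polyToK Fq (pSeq Fq a (n+1))) /
        toL Fq (polyToK Fq (qSeq Fq a (n+1)))) := by
    have e1 : toL Fq (polyToK Fq (pSeq Fq a (n+1))) = φ Fq (pSeq Fq a (n+1)) := rfl
    have e2 : toL Fq (polyToK Fq (qSeq Fq a (n+1))) = φ Fq (qSeq Fq a (n+1)) := rfl
    rw [e1, e2, DD]
    field_simp
  rw [this, hv.map_mul, h]
  field_simp

theorem irrat (hv : IsAbsExt Fq v) {ξ : K Fq} (hξ : IsCFOf Fq ξ a) {b c : Polynomial Fq}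
    (h : φ Fq b * toL Fq ξ + φ Fq c = 0) : b = 0 := by
  by_contra hb
  obtain ⟨n, hn⟩ := pow_unbounded_of_one_lt (v (φ Fq b)) (one_lt_c (Fq := Fq))
  have hc := one_lt_c (Fq := Fq)
  have hQ := Q_ge hv hξ.1 (n+1)
  have hD := D_abs hv hξ n
  have hpos := Q_pos hv hξ.1 (n+1)
  have e : φ Fq (-(qSeq Fq a (n+1) * c + pSeq Fq a (n+1) * b)) = φ Fq b * DD a ξ (n+1) := by
    rw [map_neg, map_add, _root_.map_mul, _root_.map_mul, DD]
    linear_combination -φ Fq (qSeq Fq a (n+1)) * h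
  have hb1 := v_poly_ge_one hv hb
  have hve : v (φ Fq (-(qSeq Fq a (n+1) * c + pSeq Fq a (n+1) * b))) =
      v (φ Fq b) * (v (φ Fq (qSeq Fq a (n+2))))⁻¹ := by rw [e, hv.map_mul, hD]
  have hne : -(qSeq Fq a (n+1) * c + pSeq Fq a (n+1) * b) ≠ 0 := by
    intro h0
    rw [h0, map_zero, (hv.eq_zero_iff 0).2 rfl] at hve
    have : 0 < v (φ Fq b) * (v (φ Fq (qSeq Fq a (n+2))))⁻¹ := by positivity
    linarith
  have h1 := v_poly_ge_one hv hne
  rw [hve, ← div_eq_mul_inv, one_le_div hpos] at h1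
  have : (Fintype.card Fq : ℝ) ^ n ≤ (Fintype.card Fq : ℝ) ^ (n+1) :=
    pow_le_pow_right₀ hc.le (by omega)
  linarith

theorem E_zero (hv : IsAbsExt Fq v) {ξ : K Fq} (hξ : IsCFOf Fq ξ a) {r s : ℕ} (hr : 1 ≤ r)
    (hper : ∀ n : ℕ, r < n → a (n + s) = a n) :
    DD a ξ r * DD a ξ (r+s+1) - DD a ξ (r+s) * DD a ξ (r+1) = 0 := by
  have hc := one_lt_c (Fq := Fq)
  have hk : ∀ k, v (DD a ξ (r+k) * DD a ξ (r+k+s+1) - DD a ξ (r+k+s) * DD a ξ (r+k+1)) =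
      v (DD a ξ r * DD a ξ (r+s+1) - DD a ξ (r+s) * DD a ξ (r+1)) := by
    intro k
    induction k with
    | zero => rfl
    | succ k ih =>
      rw [← ih, ← v_neg hv]
      congr 1
      have e1 := D_rec (a := a) ξ (r+k)
      have e2 := D_rec (a := a) ξ (r+k+s)
      have e3 : a (r+k+s+1) = a (r+k+1) := by
        rw [← hper (r+k+1) (by omega)]; congr 1; omega
      rw [e3] at e2
      have i1 : r + (k+1) + s + 1 = r + k + s + 2 := by omega
      have i2 : r + (k+1) + s = r + k + s + 1 := by omega
      have i3 : r + (k+1) + 1 = r + k + 2 := by omega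
      have i4 : r + (k+1) = r + k + 1 := by omega
      rw [i1, i2, i3, i4, e1, e2]
      ring
  by_contra hne
  have hpos := v_pos hv hne
  obtain ⟨n, hn⟩ := exists_pow_lt_of_lt_one hpos (inv_lt_one_of_one_lt₀ hc)
  have hD1 : ∀ m, v (DD a ξ (m+1)) ≤ ((Fintype.card Fq : ℝ)⁻¹) ^ m := by
    intro m
    rw [D_abs hv hξ m, inv_pow]
    apply inv_anti₀ (by positivity)
    exact (pow_le_pow_right₀ hc.le (Nat.le_succ m)).trans (Q_ge hv hξ.1 (m+1))
  have hinv0 : 0 ≤ (Fintype.card Fq : ℝ)⁻¹ := by positivity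
  have hinv1 : (Fintype.card Fq : ℝ)⁻¹ ≤ 1 := (inv_lt_one_of_one_lt₀ hc).le
  have hD2 : ∀ m, n + 1 ≤ m → v (DD a ξ m) ≤ ((Fintype.card Fq : ℝ)⁻¹) ^ n := by
    intro m hm
    obtain ⟨l, rfl⟩ := Nat.exists_eq_add_of_le hm
    have := hD1 (n + l)
    rw [show n + 1 + l = n + l + 1 by omega]
    exact this.trans (pow_le_pow_of_le_one hinv0 hinv1 (by omega))
  have hD3 : ∀ m, n + 1 ≤ m → v (DD a ξ m) ≤ 1 := fun m hm =>
    (hD2 m hm).trans (pow_le_one₀ hinv0 hinv1)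
  have hfin := v_sub_le hv (DD a ξ (r+n) * DD a ξ (r+n+s+1)) (DD a ξ (r+n+s) * DD a ξ (r+n+1))
  rw [hk n, hv.map_mul, hv.map_mul] at hfin
  have b1 : v (DD a ξ (r+n)) * v (DD a ξ (r+n+s+1)) ≤ ((Fintype.card Fq : ℝ)⁻¹) ^ n :=
    (mul_le_of_le_one_right (hv.nonneg _) (hD3 _ (by omega))).trans (hD2 _ (by omega))
  have b2 : v (DD a ξ (r+n+s)) * v (DD a ξ (r+n+1)) ≤ ((Fintype.card Fq : ℝ)⁻¹) ^ n :=
    (mul_le_of_le_one_right (hv.nonneg _) (hD3 _ (by omega))).trans (hD2 _ (by omega))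
  have := hfin.trans (max_le b1 b2)
  linarith

/-- Leading coefficient of the explicit quadratic polynomial. -/
def cA (a : ℕ → Polynomial Fq) (r s : ℕ) : Polynomial Fq :=
  qSeq Fq a r * qSeq Fq a (r+s+1) - qSeq Fq a (r+s) * qSeq Fq a (r+1)

/-- Middle coefficient of the explicit quadratic polynomial. -/
def cB (a : ℕ → Polynomial Fq) (r s : ℕ) : Polynomial Fq :=
  -(qSeq Fq a r * pSeq Fq a (r+s+1) + pSeq Fq a r * qSeq Fq a (r+s+1)
    - qSeq Fq a (r+s) * pSeq Fq a (r+1) - pSeq Fq a (r+s) * qSeq Fq a (r+1))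

/-- Constant coefficient of the explicit quadratic polynomial. -/
def cC (a : ℕ → Polynomial Fq) (r s : ℕ) : Polynomial Fq :=
  pSeq Fq a r * pSeq Fq a (r+s+1) - pSeq Fq a (r+s) * pSeq Fq a (r+1)

theorem quad_eq (hv : IsAbsExt Fq v) {ξ : K Fq} (hξ : IsCFOf Fq ξ a) {r s : ℕ} (hr : 1 ≤ r)
    (hper : ∀ n : ℕ, r < n → a (n + s) = a n) :
    φ Fq (cA a r s) * toL Fq ξ ^ 2 + φ Fq (cB a r s) * toL Fq ξ + φ Fq (cC a r s) = 0 := by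
  rw [← E_zero hv hξ hr hper]
  simp only [cA, cB, cC, DD, map_sub, map_add, map_neg, _root_.map_mul]
  ring

theorem cA_abs (hv : IsAbsExt Fq v) (ha : ∀ n, 1 ≤ n → 1 ≤ (a n).natDegree) {r s : ℕ}
    (hr : 1 ≤ r) (hs : 1 ≤ s) (hne : a r ≠ a (r + s)) :
    v (φ Fq (cA a r s)) = v (φ Fq (a (r+s) - a r)) *
      (v (φ Fq (qSeq Fq a r)) * v (φ Fq (qSeq Fq a (r+s)))) := by
  obtain ⟨t, rfl⟩ := Nat.exists_eq_add_of_le' hr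
  have i1 : t + 1 + s + 1 = t + s + 2 := by omega
  have i2 : t + 1 + s = t + s + 1 := by omega
  have e : φ Fq (cA a (t+1) s) = φ Fq (a (t+1+s) - a (t+1)) *
      (φ Fq (qSeq Fq a (t+1)) * φ Fq (qSeq Fq a (t+1+s))) +
      (φ Fq (qSeq Fq a (t+1)) * φ Fq (qSeq Fq a (t+s)) -
        φ Fq (qSeq Fq a (t+1+s)) * φ Fq (qSeq Fq a t)) := by
    simp only [cA, map_sub, _root_.map_mul]
    rw [i1, i2, Q_rec (t+s), Q_rec t]
    ring
  rw [e, ← hv.map_mul, ← hv.map_mul]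
  apply v_add_eq hv
  have h1 := v_poly_ge_one hv (sub_ne_zero.2 hne.symm)
  have q1 := Q_pos hv ha t
  have q2 := Q_pos hv ha (t+s)
  have q3 := (Q_lt hv ha t).1
  have q4 := (Q_lt hv ha (t+s)).1
  rw [← i2] at q2 q4
  refine lt_of_le_of_lt (v_sub_le hv _ _) ?_
  simp only [hv.map_mul]
  have hle : v (φ Fq (qSeq Fq a (t+1))) * v (φ Fq (qSeq Fq a (t+1+s))) ≤
    v (φ Fq (a (t+1+s) - a (t+1))) *
      (v (φ Fq (qSeq Fq a (t+1))) * v (φ Fq (qSeq Fq a (t+1+s)))) :=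
    le_mul_of_one_le_left (by positivity) h1
  refine lt_of_lt_of_le (max_lt ?_ ?_) hle
  · exact mul_lt_mul_of_pos_left q4 q1
  · rw [mul_comm]; exact mul_lt_mul_of_pos_right q3 q2

theorem deriv_abs (hv : IsAbsExt Fq v) {ξ : K Fq} (hξ : IsCFOf Fq ξ a) {r s : ℕ}
    (hr : 1 ≤ r) (hs : 1 ≤ s) :
    v (2 * φ Fq (cA a r s) * toL Fq ξ + φ Fq (cB a r s)) =
      v (φ Fq (qSeq Fq a (r+s+1))) * (v (φ Fq (qSeq Fq a (r+1))))⁻¹ := by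
  have e : 2 * φ Fq (cA a r s) * toL Fq ξ + φ Fq (cB a r s) =
      φ Fq (qSeq Fq a (r+s+1)) * DD a ξ r +
      ((φ Fq (qSeq Fq a r) * DD a ξ (r+s+1) - φ Fq (qSeq Fq a (r+s)) * DD a ξ (r+1))
        - φ Fq (qSeq Fq a (r+1)) * DD a ξ (r+s)) := by
    simp only [cA, cB, DD, map_sub, map_add, map_neg, _root_.map_mul]
    ring
  have hD : ∀ m, 1 ≤ m → v (DD a ξ m) = (v (φ Fq (qSeq Fq a (m+1))))⁻¹ := by
    intro m hm
    obtain ⟨l, rfl⟩ := Nat.exists_eq_add_of_le' hm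
    exact D_abs hv hξ l
  have hm := Q_mono hv hξ.1
  have key : ∀ i j, i < r + s + 1 → r ≤ j →
      v (φ Fq (qSeq Fq a i) * DD a ξ j) < v (φ Fq (qSeq Fq a (r+s+1)) * DD a ξ r) := by
    intro i j hi hj
    rw [hv.map_mul, hv.map_mul, hD j (by omega), hD r hr]
    have h1 := hm hi
    have h2 := hm.monotone (show r + 1 ≤ j + 1 by omega)
    have p1 := Q_pos hv hξ.1 r
    have p2 := Q_pos hv hξ.1 j
    simp only at h1 h2
    exact mul_lt_mul h1 (inv_anti₀ p1 h2) (by positivity) (hv.nonneg _)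
  rw [e, ← hD r hr, ← hv.map_mul]
  apply v_add_eq hv
  refine lt_of_le_of_lt (v_sub_le hv _ _) (max_lt (lt_of_le_of_lt (v_sub_le hv _ _)
    (max_lt ?_ ?_)) ?_)
  · exact key _ _ (by omega) (by omega)
  · exact key _ _ (by omega) (by omega)
  · exact key _ _ (by omega) (by omega)

theorem exists_minpoly (hv : IsAbsExt Fq v) {ξ : K Fq} (hξ : IsCFOf Fq ξ a)
    {A B C' : Polynomial Fq} (hA : A ≠ 0)
    (h : φ Fq A * toL Fq ξ ^ 2 + φ Fq B * toL Fq ξ + φ Fq C' = 0) :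
    ∃ P, IsMinPolyOf Fq P (toL Fq ξ) ∧ P.natDegree = 2 := by
  set P : Polynomial (Polynomial Fq) := C A * X ^ 2 + C B * X + C C' with hP
  have hPd : P.natDegree = 2 := natDegree_quadratic hA
  have hP0 : P ≠ 0 := by intro h0; rw [h0] at hPd; simp at hPd
  have hPe : eval₂RingHom (φ Fq) (toL Fq ξ) P = 0 := by
    simp only [hP, coe_eval₂RingHom, eval₂_add, eval₂_mul, eval₂_C, eval₂_pow, eval₂_X]
    exact h
  obtain ⟨u, hu⟩ := UniqueFactorizationMonoid.factors_prod hP0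
  have hprod : eval₂RingHom (φ Fq) (toL Fq ξ) (UniqueFactorizationMonoid.factors P).prod = 0 := by
    rw [← hu, _root_.map_mul] at hPe
    exact (mul_eq_zero.1 hPe).resolve_right ((u.isUnit.map _).ne_zero)
  rw [map_multiset_prod, Multiset.prod_eq_zero_iff, Multiset.mem_map] at hprod
  obtain ⟨M, hM, hMe⟩ := hprod
  have hirr := UniqueFactorizationMonoid.irreducible_of_factor M hM
  have hdvd := UniqueFactorizationMonoid.dvd_of_mem_factors hM
  have hle : M.natDegree ≤ 2 := hPd ▸ natDegree_le_of_dvd hdvd hP0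
  have h2 : M.natDegree = 2 := by
    by_contra hne
    have h1 : M.natDegree ≤ 1 := by omega
    have hMx := eq_X_add_C_of_natDegree_le_one h1
    rw [hMx] at hMe
    simp only [coe_eval₂RingHom, eval₂_add, eval₂_mul, eval₂_C, eval₂_X] at hMe
    have hb := irrat hv hξ hMe
    rw [hb, map_zero, zero_mul, zero_add] at hMe
    have hc := phi_inj hv hMe
    rw [hb, hc] at hMx
    apply hirr.ne_zero
    rw [hMx]; simp
  have hl0 : M.leadingCoeff.leadingCoeff ≠ 0 :=
    leadingCoeff_ne_zero.2 (leadingCoeff_ne_zero.2 hirr.ne_zero)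
  have hunit : IsUnit (C (C (M.leadingCoeff.leadingCoeff)⁻¹) : Polynomial (Polynomial Fq)) :=
    isUnit_C.2 (isUnit_C.2 (isUnit_iff_ne_zero.2 (inv_ne_zero hl0)))
  have hdeg : (C (C (M.leadingCoeff.leadingCoeff)⁻¹) * M).natDegree = 2 := by
    rw [natDegree_C_mul (by simpa using hl0), h2]
  have hirr' : Irreducible (C (C (M.leadingCoeff.leadingCoeff)⁻¹) * M) :=
    (irreducible_isUnit_mul hunit).2 hirr
  refine ⟨C (C (M.leadingCoeff.leadingCoeff)⁻¹) * M, ⟨by omega, hirr', ?_, ?_, ?_⟩, hdeg⟩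
  · exact hirr'.isPrimitive (by omega)
  · rw [leadingCoeff_mul, leadingCoeff_C, Monic, leadingCoeff_mul, leadingCoeff_C]
    exact inv_mul_cancel₀ hl0
  · rw [evalL, eval₂_mul]
    rw [coe_eval₂RingHom] at hMe
    rw [hMe, mul_zero]

theorem conj_eq (hv : IsAbsExt Fq v) {ξ : K Fq} (hξ : IsCFOf Fq ξ a)
    {A B C' : Polynomial Fq}
    (h : φ Fq A * toL Fq ξ ^ 2 + φ Fq B * toL Fq ξ + φ Fq C' = 0)
    {ξ' : L Fq} (hc : IsConjOf Fq ξ' (toL Fq ξ)) :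
    φ Fq A * (toL Fq ξ - ξ') = 2 * φ Fq A * toL Fq ξ + φ Fq B := by
  obtain ⟨hd, hf⟩ := hc
  set M := minPolyPrim Fq (toL Fq ξ)
  set x := toL Fq ξ
  have e : C (φ Fq M.leadingCoeff) * (X - C x) * (X - C ξ') =
      C (φ Fq M.leadingCoeff) * X ^ 2 + C (-φ Fq M.leadingCoeff * (x + ξ')) * X +
        C (φ Fq M.leadingCoeff * x * ξ') := by
    simp only [_root_.map_mul, map_add, map_neg]; ring
  rw [e] at hf
  have h1 : φ Fq (M.coeff 1) = -φ Fq M.leadingCoeff * (x + ξ') := by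
    rw [← coeff_map, hf]; simp [coeff_X, coeff_C]
  have h0 : φ Fq (M.coeff 0) = φ Fq M.leadingCoeff * x * ξ' := by
    rw [← coeff_map, hf]; simp [coeff_X, coeff_C]
  have hM0 : M.leadingCoeff ≠ 0 := by
    intro h; rw [leadingCoeff_eq_zero] at h; rw [h] at hd; simp at hd
  have hl : φ Fq M.leadingCoeff ≠ 0 := fun h => hM0 (phi_inj hv h)
  have hb : M.leadingCoeff * B - A * M.coeff 1 = 0 := by
    apply irrat hv hξ (c := M.leadingCoeff * C' - A * M.coeff 0)
    simp only [map_sub, _root_.map_mul]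
    rw [h1, h0]
    linear_combination φ Fq M.leadingCoeff * h
  have hb' := congrArg (φ Fq) hb
  simp only [map_sub, _root_.map_mul, map_zero, h1] at hb'
  apply mul_left_cancel₀ hl
  linear_combination -hb'

end helpers


theorem stmt12 (Fq : Type) [Field Fq] [Fintype Fq]
    (v : L Fq → ℝ) (hv : IsAbsExt Fq v)
    (a : ℕ → Polynomial Fq) (r s : ℕ) (hr : 1 ≤ r) (hs : 1 ≤ s) (ha0 : a 0 = 0)
    (hper : ∀ n : ℕ, r < n → a (n + s) = a n) (hne : a r ≠ a (r + s))
    (ξ : K Fq) (hξ : IsCFOf Fq ξ a) :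
    (∃ P, IsMinPolyOf Fq P (toL Fq ξ) ∧ P.natDegree = 2) ∧
    ∀ ξ' : L Fq, IsConjOf Fq ξ' (toL Fq ξ) →
      min (kabs Fq (polyToK Fq (a r))) (kabs Fq (polyToK Fq (a (r + s)))) /
          kabs Fq (polyToK Fq (qSeq Fq a (r + 1))) ^ 2 ≤ v (toL Fq ξ - ξ') ∧
      v (toL Fq ξ - ξ') ≤ kabs Fq (polyToK Fq (a r * a (r + s))) /
          kabs Fq (polyToK Fq (qSeq Fq a (r + 1))) ^ 2 := by
  have hquad := quad_eq hv hξ hr hper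
  have hAabs := cA_abs hv hξ.1 hr hs hne
  have hd1 := v_poly_ge_one hv (sub_ne_zero.2 hne.symm)
  obtain ⟨t, rfl⟩ := Nat.exists_eq_add_of_le' hr
  have q1 := Q_pos hv hξ.1 t
  have q2 := Q_pos hv hξ.1 (t+s)
  have q3 := (Q_lt hv hξ.1 t).2
  have q4 := (Q_lt hv hξ.1 (t+s)).2
  have i2 : t + s + 1 = t + 1 + s := by omega
  have i1 : t + s + 2 = t + 1 + s + 1 := by omega
  rw [i2] at q2 q4
  rw [i1] at q4
  have q5 := Q_pos hv hξ.1 (t+1)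
  have hA0 : cA a (t+1) s ≠ 0 := by
    intro h0
    rw [h0, map_zero, (hv.eq_zero_iff 0).2 rfl] at hAabs
    have : 0 < v (φ Fq (a (t+1+s) - a (t+1))) * (v (φ Fq (qSeq Fq a (t+1))) *
      v (φ Fq (qSeq Fq a (t+1+s)))) := by positivity
    linarith
  refine ⟨exists_minpoly hv hξ hA0 hquad, fun ξ' hc => ?_⟩
  have hconj := congrArg v (conj_eq hv hξ hquad hc)
  rw [hv.map_mul, deriv_abs hv hξ hr hs, hAabs] at hconj
  simp only [← v_phi _ hv]
  rw [_root_.map_mul (φ Fq), hv.map_mul]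
  have hc1 := one_lt_c (Fq := Fq)
  have ha1 := v_poly_ge_c hv (hξ.1 (t+1) hr)
  have ha2 := v_poly_ge_c hv (hξ.1 (t+1+s) (by omega))
  have hdm : v (φ Fq (a (t+1+s) - a (t+1))) ≤
      max (v (φ Fq (a (t+1+s)))) (v (φ Fq (a (t+1)))) := by
    rw [map_sub]; exact v_sub_le hv _ _
  have hw0 := hv.nonneg (toL Fq ξ - ξ')
  rw [q4] at hconj
  generalize v (φ Fq (a (t+1+s) - a (t+1))) = d at *
  generalize v (toL Fq ξ - ξ') = w at *
  generalize v (φ Fq (qSeq Fq a (t+1+s))) = Qs at *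
  generalize v (φ Fq (a (t+1+s))) = as at *
  generalize v (φ Fq (a (t+1))) = ar at *
  rw [q3] at hconj ⊢
  generalize v (φ Fq (qSeq Fq a (t+1))) = Q at *
  have har : 0 < ar := by linarith
  have has : 0 < as := by linarith
  have hw : w = as * ar / (d * (ar * Q) ^ 2) := by
    have hd0 : 0 < d := by linarith
    field_simp at hconj ⊢
    linear_combination hconj
  have hd0 : 0 < d := by linarith
  have hw' : w = (ar * as / d) / (ar * Q) ^ 2 := by rw [hw]; field_simp
  rw [hw']
  constructor
  · gcongr
    rw [le_div_iff₀ hd0]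
    calc min ar as * d ≤ min ar as * max as ar := by gcongr
      _ = ar * as := by rw [max_comm, min_mul_max]
  · gcongr
    exact div_le_self (by positivity) hd1

end Ooto
end
end

section
/- Let P(X) ∈ (F_q[T])[X] be a non-constant irreducible polynomial of degree n and inseparable degree f. Let ξ ∈ F_q((T^{-1})) and let α be a root of P(X) (in the algebraic closure of F_q((T^{-1}))) for which |ξ − α| is minimal. If n ≥ 2f, then |ξ − α| ≤ |P(ξ)|^{1/f} · H(P)^{n/f² − 2/f}. -/
open Polynomial Filter
open scoped ENNReal

noncomputable section

namespace Ooto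

variable (Fq : Type) [Field Fq] [Fintype Fq]

section helpers

variable {F : Type*} [Field F] (w : AbsoluteValue F ℝ) (hna : IsNonarchimedean w)

include hna in
lemma aux_sub_le (x y : F) : w (x - y) ≤ max 1 (w x) * max 1 (w y) := by
  have h := hna x (-y)
  rw [AbsoluteValue.map_neg, ← sub_eq_add_neg] at h
  refine h.trans (max_le ?_ ?_)
  · calc w x ≤ max 1 (w x) * 1 := by simp
      _ ≤ _ := by gcongr; simp
  · calc w y ≤ 1 * max 1 (w y) := by simp
      _ ≤ _ := by gcongr; simp

open Classical in
lemma aux_prod {F : Type*} (T : Finset F) (k : ℕ) (hk : T.card = k + 1) (M : F → ℝ) (hM : ∀ x, 0 < M x) :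
    ∏ β ∈ T, ∏ γ ∈ T.erase β, (M β * M γ) = (∏ γ ∈ T, M γ) ^ (2 * k) := by
  have hP : 0 < ∏ γ ∈ T, M γ := Finset.prod_pos fun x _ => hM x
  have h1 : ∀ β ∈ T, ∏ γ ∈ T.erase β, (M β * M γ) = M β ^ k * (∏ γ ∈ T.erase β, M γ) := by
    intro β hβ
    rw [Finset.prod_mul_distrib, Finset.prod_const, Finset.card_erase_of_mem hβ, hk]
    simp
  rw [Finset.prod_congr rfl h1, Finset.prod_mul_distrib, Finset.prod_pow]
  have h2 : (∏ β ∈ T, ∏ γ ∈ T.erase β, M γ) * (∏ γ ∈ T, M γ) = (∏ γ ∈ T, M γ) ^ k * (∏ γ ∈ T, M γ) := by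
    rw [← Finset.prod_mul_distrib, ← pow_succ, ← hk, ← Finset.prod_const]
    exact Finset.prod_congr rfl fun β hβ => Finset.prod_erase_mul _ _ hβ
  rw [mul_right_cancel₀ hP.ne' h2]
  ring

open Classical in
include hna in
lemma aux_core (S : Finset F) (b : F) (hb : b ∈ S) (a : F) (ha : a ≠ 0) (H : ℝ) (k : ℕ)
    (hk : S.card = k + 2)
    (hH : w a * ∏ γ ∈ S, max 1 (w γ) ≤ H)
    (hd : 1 ≤ w a ^ k * ∏ β ∈ S, (w a * ∏ γ ∈ S.erase β, w (β - γ))) :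
    1 ≤ (w a * ∏ γ ∈ S.erase b, w (b - γ)) * H ^ k := by
  set T := S.erase b with hT
  have hTk : T.card = k + 1 := by rw [hT, Finset.card_erase_of_mem hb, hk]; rfl
  set D := ∏ γ ∈ T, w (b - γ) with hD
  set N := ∏ γ ∈ T, max 1 (w γ) with hN
  have hD0 : 0 ≤ D := Finset.prod_nonneg fun _ _ => w.nonneg _
  have hN0 : 0 ≤ N := Finset.prod_nonneg fun _ _ => by positivity
  have hwa : 0 ≤ w a := w.nonneg a
  have hNH : w a * N ≤ H := by
    refine le_trans ?_ hH
    rw [← Finset.mul_prod_erase S _ hb]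
    gcongr
    calc N = 1 * N := by ring
      _ ≤ _ := by gcongr; simp
  have h1 : ∏ β ∈ T, (w a * ∏ γ ∈ S.erase β, w (β - γ)) ≤
      w a ^ (k + 1) * (D * N ^ (2 * k)) := by
    rw [Finset.prod_mul_distrib, Finset.prod_const, hTk]
    gcongr
    rw [hN, ← aux_prod T k hTk (fun γ => max 1 (w γ)) (fun x => by positivity), hD,
      ← Finset.prod_mul_distrib]
    refine Finset.prod_le_prod (fun _ _ => Finset.prod_nonneg fun _ _ => w.nonneg _) ?_
    intro β hβ
    have hbb : b ∈ S.erase β := Finset.mem_erase.2 ⟨(Finset.ne_of_mem_erase hβ).symm, hb⟩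
    rw [← Finset.mul_prod_erase _ _ hbb, w.map_sub β b]
    have : (S.erase β).erase b = T.erase β := Finset.erase_right_comm
    rw [this]
    refine mul_le_mul_of_nonneg_left ?_ (w.nonneg _)
    exact Finset.prod_le_prod (fun _ _ => w.nonneg _) fun γ _ => aux_sub_le w hna β γ
  rw [← Finset.mul_prod_erase S _ hb] at hd
  have h2 : 1 ≤ (w a * D * (w a * N) ^ k) ^ 2 := by
    refine hd.trans ?_
    calc _ ≤ w a ^ k * ((w a * D) * (w a ^ (k + 1) * (D * N ^ (2 * k)))) := by gcongr
      _ = _ := by ring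
  have h3 : 1 ≤ w a * D * (w a * N) ^ k := by
    by_contra hlt
    push Not at hlt
    have : (w a * D * (w a * N) ^ k) ^ 2 < 1 := pow_lt_one₀ (by positivity) hlt (by norm_num)
    linarith
  refine h3.trans ?_
  gcongr

open Classical in
include hna in
lemma aux_final (S : Finset F) (b : F) (hb : b ∈ S) (a : F) (ha : a ≠ 0) (H : ℝ) (k : ℕ)
    (hk : S.card = k + 2)
    (hH : w a * ∏ γ ∈ S, max 1 (w γ) ≤ H)
    (hd : 1 ≤ w a ^ k * ∏ β ∈ S, (w a * ∏ γ ∈ S.erase β, w (β - γ)))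
    (η : F) (hη : ∀ γ ∈ S, w (η - b) ≤ w (η - γ)) :
    w (η - b) ≤ (w a * ∏ γ ∈ S, w (η - γ)) * H ^ k := by
  have h := aux_core w hna S b hb a ha H k hk hH hd
  have hH0 : 0 ≤ H := le_trans (mul_nonneg (w.nonneg _)
    (Finset.prod_nonneg fun _ _ => by positivity)) hH
  have hle : ∏ γ ∈ S.erase b, w (b - γ) ≤ ∏ γ ∈ S.erase b, w (η - γ) := by
    refine Finset.prod_le_prod (fun _ _ => w.nonneg _) fun γ hγ => ?_
    have h1 := hna (b - η) (η - γ)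
    rw [sub_add_sub_cancel, w.map_sub b η] at h1
    exact h1.trans (max_le (hη γ (Finset.mem_of_mem_erase hγ)) le_rfl)
  rw [← Finset.mul_prod_erase S _ hb]
  have hwa : 0 ≤ w a := w.nonneg a
  have h0 : 0 ≤ w (η - b) := w.nonneg _
  calc w (η - b) = w (η - b) * 1 := by ring
    _ ≤ w (η - b) * ((w a * ∏ γ ∈ S.erase b, w (b - γ)) * H ^ k) := by gcongr
    _ ≤ w (η - b) * ((w a * ∏ γ ∈ S.erase b, w (η - γ)) * H ^ k) := by gcongr
    _ = _ := by ring

include hna in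
lemma aux_gauss (S : Finset F) (a : F) :
    w a * ∏ γ ∈ S, max 1 (w γ) ≤ (C a * ∏ γ ∈ S, (X - C γ)).gaussNorm w 1 := by
  rw [gaussNorm_mul hna one_pos, gaussNorm_C]
  refine mul_le_mul_of_nonneg_left ?_ (w.nonneg _)
  classical
  induction S using Finset.induction_on with
  | empty => simpa using ((1 : F[X]).le_gaussNorm w zero_le_one 0)
  | insert x s hx ih =>
    rw [Finset.prod_insert hx, Finset.prod_insert hx, gaussNorm_mul hna one_pos]
    have h0 := (X - C x : F[X]).le_gaussNorm w zero_le_one 0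
    have h1 := (X - C x : F[X]).le_gaussNorm w zero_le_one 1
    simp [coeff_X, coeff_C] at h0 h1
    have : 0 ≤ ∏ γ ∈ s, max 1 (w γ) := Finset.prod_nonneg fun _ _ => by positivity
    have hh := (X - C x : F[X]).gaussNorm_nonneg w zero_le_one
    gcongr
    exact max_le h1 h0

/-- The main estimate for separable polynomials. -/
lemma aux_sep {A : Type*} [CommRing A] [IsDomain A] (φ : A →+* F) (hφ : Function.Injective φ)
    (h1 : ∀ x : A, x ≠ 0 → 1 ≤ w (φ x)) (hna : IsNonarchimedean w)
    (R : A[X]) (k : ℕ) (hk : R.natDegree = k + 2) (hsep : (R.map φ).Separable)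
    (hspl : (R.map φ).Splits) (H : ℝ) (hH : ∀ i, w (φ (R.coeff i)) ≤ H)
    (η b : F) (hb : (R.map φ).eval b = 0)
    (hmin : ∀ γ, (R.map φ).eval γ = 0 → w (η - b) ≤ w (η - γ)) :
    w (η - b) ≤ w ((R.map φ).eval η) * H ^ k := by
  classical
  set Q := R.map φ with hQ
  have hdegQ : Q.natDegree = k + 2 := by rw [hQ, natDegree_map_eq_of_injective hφ, hk]
  have hQ0 : Q ≠ 0 := fun h => by simp [h] at hdegQ
  set a := Q.leadingCoeff with ha
  have ha0 : a ≠ 0 := leadingCoeff_ne_zero.2 hQ0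
  have hnd : Q.roots.Nodup := nodup_roots hsep
  set S := Q.roots.toFinset with hS
  have hSv : S.val = Q.roots := by rw [hS, Multiset.toFinset_val, hnd.dedup]
  have hcard : S.card = k + 2 := by
    rw [Finset.card_def, hSv, ← hdegQ, hspl.natDegree_eq_card_roots]
  have hprod : Q = C a * ∏ γ ∈ S, (X - C γ) := by
    conv_lhs => rw [hspl.eq_prod_roots]
    rw [Finset.prod, hSv]
  have hmem : ∀ γ, γ ∈ S ↔ Q.eval γ = 0 := fun γ => by
    rw [hS, Multiset.mem_toFinset, mem_roots hQ0, IsRoot]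
  have hder : ∀ β ∈ S, Q.derivative.eval β = a * ∏ γ ∈ S.erase β, (β - γ) := by
    intro β hβ
    conv_lhs => rw [hprod]
    rw [derivative_C_mul, eval_C_mul, derivative_prod_finset, eval_finsetSum,
      Finset.sum_eq_single β]
    · simp [eval_prod]
    · intro c hc hcb
      simp only [derivative_X_sub_C, mul_one, eval_prod]
      exact Finset.prod_eq_zero (Finset.mem_erase.2 ⟨hcb.symm, hβ⟩) (by simp)
    · exact fun h => absurd hβ h
  have hlc : φ R.leadingCoeff = a := by
    rw [ha, hQ, leadingCoeff_map_of_injective hφ]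
  have hres : φ (resultant R R.derivative R.natDegree (R.natDegree - 1)) =
      a ^ (k + 1) * ∏ β ∈ S, Q.derivative.eval β := by
    rw [← resultant_map_map, ← derivative_map, ← hQ, hk, ← hdegQ,
      resultant_eq_prod_eval _ _ _ (natDegree_derivative_le Q) hspl, hdegQ]
    rw [Finset.prod, hSv]
    rfl
  rw [resultant_deriv (natDegree_pos_iff_degree_pos.1 (by omega))] at hres
  have hne : ∏ β ∈ S, Q.derivative.eval β ≠ 0 := by
    refine Finset.prod_ne_zero_iff.2 fun β hβ => ?_
    rw [hder β hβ]
    refine mul_ne_zero ha0 (Finset.prod_ne_zero_iff.2 fun γ hγ => ?_)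
    exact sub_ne_zero.2 (Finset.ne_of_mem_erase hγ).symm
  have hdisc0 : R.discr ≠ 0 := by
    intro h
    rw [h, mul_zero, map_zero] at hres
    exact mul_ne_zero (pow_ne_zero _ ha0) hne hres.symm
  have hd : 1 ≤ w a ^ k * ∏ β ∈ S, (w a * ∏ γ ∈ S.erase β, w (β - γ)) := by
    have e1 : w a * w (φ R.discr) =
        w a * (w a ^ k * ∏ β ∈ S, (w a * ∏ γ ∈ S.erase β, w (β - γ))) := by
      have := congrArg w hres
      rw [map_mul φ, map_mul φ, map_pow φ, hlc, map_neg φ, map_one φ, map_mul w, map_mul w,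
        map_pow w, AbsoluteValue.map_neg, map_one w, one_pow, one_mul, map_mul w, map_pow w,
        map_prod w] at this
      rw [this, pow_succ', mul_assoc]
      congr 2
      refine Finset.prod_congr rfl fun β hβ => ?_
      rw [hder β hβ, map_mul, map_prod]
    rw [← mul_left_cancel₀ ((w.ne_zero_iff).2 ha0) e1]
    exact h1 _ hdisc0
  have hHH : w a * ∏ γ ∈ S, max 1 (w γ) ≤ H := by
    refine (aux_gauss w hna S a).trans ?_
    rw [← hprod]
    obtain ⟨i, hi⟩ := exists_eq_gaussNorm w 1 Q
    rw [hi, one_pow, mul_one, hQ, coeff_map]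
    exact hH i
  have := aux_final w hna S b ((hmem b).2 hb) a ha0 H k hcard hHH hd η
    (fun γ hγ => hmin γ ((hmem γ).1 hγ))
  refine this.trans_eq ?_
  conv_rhs => rw [hprod]
  rw [eval_C_mul, eval_prod, map_mul, map_prod]
  simp

end helpers

section helpers2

lemma polyToK_coeff (g : Polynomial Fq) (n : ℕ) :
    (polyToK Fq g).coeff (-(n : ℤ)) = g.coeff n := by
  induction g using Polynomial.induction_on' with
  | add p q hp hq => rw [map_add, HahnSeries.coeff_add, hp, hq, coeff_add]
  | monomial m a =>
    have : polyToK Fq (monomial m a) = HahnSeries.single (-(m : ℤ)) a := by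
      simp [polyToK, TT, HahnSeries.single_pow, HahnSeries.C_apply]
    rw [this, HahnSeries.coeff_single, coeff_monomial]
    simp [eq_comm]

lemma polyToK_injective : Function.Injective (polyToK Fq) := by
  intro f g h
  ext n
  rw [← polyToK_coeff, ← polyToK_coeff, h]

lemma one_le_kabs (g : Polynomial Fq) (hg : g ≠ 0) : 1 ≤ kabs Fq (polyToK Fq g) := by
  have h0 : polyToK Fq g ≠ 0 := fun h => hg (polyToK_injective Fq (by rw [h, map_zero]))
  rw [kabs, if_neg h0]
  have hle : (polyToK Fq g).order ≤ -(g.natDegree : ℤ) := by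
    apply HahnSeries.order_le_of_coeff_ne_zero
    rw [polyToK_coeff]
    exact leadingCoeff_ne_zero.2 hg
  have h1 : (1 : ℝ) ≤ Fintype.card Fq := by exact_mod_cast Fintype.card_pos
  exact one_le_zpow₀ h1 (by omega)

lemma kabs_nonneg (x : K Fq) : 0 ≤ kabs Fq x := by
  rw [kabs]; split_ifs <;> positivity

lemma coeff_le_Hpoly (P : Polynomial (Polynomial Fq)) (i : ℕ) :
    kabs Fq (polyToK Fq (P.coeff i)) ≤ Hpoly Fq P := by
  refine le_ciSup (f := fun i => kabs Fq (polyToK Fq (P.coeff i))) ?_ i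
  refine Set.Finite.bddAbove (Set.Finite.subset
    ((P.support.image fun i => kabs Fq (polyToK Fq (P.coeff i))) ∪ {0}).finite_toSet ?_)
  rintro _ ⟨j, rfl⟩
  by_cases hj : P.coeff j = 0
  · simp [hj, kabs]
  · simp only [Finset.coe_union, Finset.coe_image, Set.mem_union]
    exact Or.inl ⟨j, by simpa using hj, rfl⟩

/-- The absolute value attached to `IsAbsExt`. -/
def toAbs (v : L Fq → ℝ) (hv : IsAbsExt Fq v) : AbsoluteValue (L Fq) ℝ where
  toFun := v
  map_mul' := hv.map_mul
  nonneg' := hv.nonneg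
  eq_zero' := hv.eq_zero_iff
  add_le' x y := (hv.add_le x y).trans (max_le_add_of_nonneg (hv.nonneg x) (hv.nonneg y))

lemma insepDeg_spec (P : Polynomial (Polynomial Fq)) (hirr : Irreducible P)
    (hdeg : 0 < P.natDegree) : ∃ (j : ℕ) (R : Polynomial (Polynomial Fq)),
      insepDeg Fq P = ringChar Fq ^ j ∧ expand _ (ringChar Fq ^ j) R = P ∧
      derivative R ≠ 0 := by
  have hp : (ringChar Fq).Prime := CharP.char_is_prime Fq _
  set s := {j : ℕ | ∃ R : Polynomial (Polynomial Fq),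
    P = R.comp (Polynomial.X ^ (ringChar Fq) ^ j)} with hs
  have hne : s.Nonempty := ⟨0, P, by simp⟩
  have hbdd : BddAbove s := by
    refine ⟨P.natDegree, ?_⟩
    rintro j ⟨R, hR⟩
    have h1 : P.natDegree = R.natDegree * ringChar Fq ^ j := by
      conv_lhs => rw [hR]
      rw [natDegree_comp, natDegree_X_pow]
    have h2 : 0 < R.natDegree := Nat.pos_of_ne_zero fun h => by rw [h] at h1; omega
    have h3 : j < ringChar Fq ^ j := Nat.lt_pow_self hp.one_lt
    nlinarith
  obtain ⟨R, hR⟩ := Nat.sSup_mem hne hbdd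
  refine ⟨sSup s, R, rfl, ?_, ?_⟩
  · rw [expand_eq_comp_X_pow, ← hR]
  · intro hd
    have hc : CharP (Polynomial Fq) (ringChar Fq) := inferInstance
    have he := expand_contract (ringChar Fq) hd hp.ne_zero
    have : sSup s + 1 ∈ s := by
      refine ⟨contract (ringChar Fq) R, ?_⟩
      rw [← expand_eq_comp_X_pow, pow_succ, ← expand_expand, he, expand_eq_comp_X_pow, ← hR]
    have := le_csSup hbdd this
    omega

lemma aux_separable {A F : Type*} [CommRing A] [IsDomain A] [NormalizedGCDMonoid A] [Field F]
    (φ : A →+* F) (hφ : Function.Injective φ) (R : A[X]) (hirr : Irreducible R)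
    (hdeg : R.natDegree ≠ 0) (hd : derivative R ≠ 0) : (R.map φ).Separable := by
  have h1 := ((hirr.isPrimitive hdeg).irreducible_iff_irreducible_map_fraction_map
    (K := FractionRing A)).1 hirr
  have hinj := IsFractionRing.injective A (FractionRing A)
  have h2 : (R.map (algebraMap A (FractionRing A))).Separable := by
    rw [separable_iff_derivative_ne_zero h1, derivative_map]
    exact (Polynomial.map_ne_zero_iff hinj).2 hd
  have h3 := h2.map (f := IsFractionRing.lift hφ)
  rw [Polynomial.map_map] at h3
  have h4 : (IsFractionRing.lift hφ).comp (algebraMap A (FractionRing A)) = φ := by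
    ext x
    simp
  rw [h4] at h3
  exact h3

end helpers2

theorem stmt16 (Fq : Type) [Field Fq] [Fintype Fq]
    (v : L Fq → ℝ) (hv : IsAbsExt Fq v)
    (P : Polynomial (Polynomial Fq)) (hirr : Irreducible P) (hdeg : 0 < P.natDegree)
    (ξ : K Fq) (α : L Fq) (hα : evalL Fq P α = 0)
    (hmin : ∀ β : L Fq, evalL Fq P β = 0 → v (toL Fq ξ - α) ≤ v (toL Fq ξ - β))
    (hnf : 2 * insepDeg Fq P ≤ P.natDegree) :
    v (toL Fq ξ - α) ≤ kabs Fq (evalK Fq P ξ) ^ ((insepDeg Fq P : ℝ)⁻¹) *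
      Hpoly Fq P ^ ((P.natDegree : ℝ) / (insepDeg Fq P : ℝ) ^ 2 - 2 / (insepDeg Fq P : ℝ)) := by
  obtain ⟨j, R, hf, hR, hd⟩ := insepDeg_spec Fq P hirr hdeg
  have hp : (ringChar Fq).Prime := CharP.char_is_prime Fq _
  have : Fact (ringChar Fq).Prime := ⟨hp⟩
  set f := ringChar Fq ^ j with hfdef
  have hfpos : 0 < f := pow_pos hp.pos _
  rw [hf] at hnf ⊢
  have hdegP : P.natDegree = R.natDegree * f := by rw [← hR, natDegree_expand]
  have hm : 2 ≤ R.natDegree := by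
    rw [hdegP] at hnf
    exact Nat.le_of_mul_le_mul_right hnf hfpos
  obtain ⟨k, hk⟩ : ∃ k, R.natDegree = k + 2 := ⟨R.natDegree - 2, by omega⟩
  have hRirr : Irreducible R := of_irreducible_expand hfpos.ne' (by rw [hR]; exact hirr)
  have hφ : Function.Injective (φ Fq) := by
    rw [φ, RingHom.coe_comp]
    exact (toL Fq).injective.comp (polyToK_injective Fq)
  have : CharP (L Fq) (ringChar Fq) :=
    charP_of_injective_ringHom (f := (φ Fq).comp Polynomial.C)
      (RingHom.injective _) (ringChar Fq)
  have hvφ : ∀ x, v (φ Fq x) = kabs Fq (polyToK Fq x) := fun x => hv.extends_kabs _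
  have hevalL : ∀ β, evalL Fq P β = (R.map (φ Fq)).eval (β ^ f) := by
    intro β
    rw [evalL, eval_map, ← hR, expand_eq_comp_X_pow, eval₂_comp, eval₂_X_pow]
  have hevalK : toL Fq (evalK Fq P ξ) = evalL Fq P (toL Fq ξ) := by
    rw [evalK, evalL, hom_eval₂]; rfl
  have hpow : ∀ β, v (toL Fq ξ - β) ^ f = v (toL Fq ξ ^ f - β ^ f) := by
    intro β
    rw [hfdef, ← sub_pow_char_pow]
    exact (map_pow (toAbs Fq v hv) _ _).symm
  have key := aux_sep (toAbs Fq v hv) (φ Fq) hφ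
    (fun x hx => (one_le_kabs Fq x hx).trans_eq (hvφ x).symm) (fun x y => hv.add_le x y) R k hk
    (by
      classical
      letI : NormalizedGCDMonoid (Polynomial Fq) := Classical.choice inferInstance
      exact aux_separable (φ Fq) hφ R hRirr (by omega) hd)
    (IsAlgClosed.splits _) (Hpoly Fq P)
    (fun i => by
      have h := coeff_le_Hpoly Fq P (i * f)
      rw [← hR, coeff_expand_mul hfpos, hR] at h
      exact (hvφ _).trans_le h)
    (toL Fq ξ ^ f) (α ^ f) (by rw [← hevalL]; exact hα)
    (fun γ hγ => by
      obtain ⟨β, rfl⟩ := IsAlgClosed.exists_pow_nat_eq γ hfpos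
      have := hmin β (by rw [hevalL]; exact hγ)
      have h2 := pow_le_pow_left₀ (hv.nonneg _) this f
      rw [hpow, hpow] at h2
      exact h2)
  have key2 : v (toL Fq ξ - α) ^ f ≤ kabs Fq (evalK Fq P ξ) * Hpoly Fq P ^ k := by
    rw [hpow, ← hv.extends_kabs, hevalK, hevalL]
    exact key
  have hH0 : 0 ≤ Hpoly Fq P := (kabs_nonneg Fq _).trans (coeff_le_Hpoly Fq P 0)
  have hf0 : (f : ℝ) ≠ 0 := by exact_mod_cast hfpos.ne'
  have hexp : (P.natDegree : ℝ) / (f : ℝ) ^ 2 - 2 / (f : ℝ) = (k : ℝ) * (f : ℝ)⁻¹ := by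
    rw [hdegP, hk]; push_cast; field_simp; ring
  rw [hexp, Real.rpow_mul hH0, Real.rpow_natCast, ← Real.mul_rpow (kabs_nonneg Fq _)
    (pow_nonneg hH0 _)]
  calc v (toL Fq ξ - α) = (v (toL Fq ξ - α) ^ f) ^ ((f : ℝ)⁻¹) :=
        (Real.pow_rpow_inv_natCast (hv.nonneg _) hfpos.ne').symm
    _ ≤ _ := Real.rpow_le_rpow (pow_nonneg (hv.nonneg _) _) key2 (by positivity)

end Ooto
end
end
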